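/- arXiv:1908.06885 — 2 statements merged into one kernel-verified Lean document; each statement's English description precedes it below -/
import Mathlib

section
/- Let ℓ ≥ 2, let A be an essential hyperplane arrangement in K^ℓ, let H ∈ A, and suppose A' = A \ {H} is also essential. Then r(A') ≤ r(A) ≤ r(A') + 1. -/
open Classical MvPolynomial

variable {K : Type*} [Field K] [CharZero K] {ℓ : ℕ}

/-- A (central) hyperplane arrangement: a finite set of nonzero linear forms,
pairwise non-proportional. -/
def IsArrangement (A : Finset (MvPolynomial (Fin ℓ) K)) : Prop :=
  (∀ α ∈ A, α ≠ 0 ∧ α.IsHomogeneous 1) ∧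
    ∀ α ∈ A, ∀ β ∈ A, α ≠ β → ∀ c : K, α ≠ c • β

/-- The arrangement is essential: the common zero set of its forms is `{0}`. -/
def IsEssential (A : Finset (MvPolynomial (Fin ℓ) K)) : Prop :=
  ∀ v : Fin ℓ → K, (∀ α ∈ A, eval v α = 0) → v = 0

/-- The defining polynomial `Q(A)`. -/
noncomputable def Qpoly (A : Finset (MvPolynomial (Fin ℓ) K)) : MvPolynomial (Fin ℓ) K :=
  ∏ α ∈ A, α

/-- Apply a derivation `θ = Σ θ_j ∂_j` to a polynomial. -/
noncomputable def applyDer (θ : Fin ℓ → MvPolynomial (Fin ℓ) K)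
    (f : MvPolynomial (Fin ℓ) K) : MvPolynomial (Fin ℓ) K :=
  ∑ j, θ j * pderiv j f

/-- The minimal degree of a Jacobian relation `r(A)`. -/
noncomputable def mdr (A : Finset (MvPolynomial (Fin ℓ) K)) : ℕ :=
  sInf {r | ∃ θ : Fin ℓ → MvPolynomial (Fin ℓ) K, θ ≠ 0 ∧
    (∀ j, (θ j).IsHomogeneous r) ∧ applyDer θ (Qpoly A) = 0}

/-- The number of elements `|A^H|` of the restriction of `A` to `H`:
the number of distinct subspaces `H ∩ ker α_L`, `L ∈ A \ {H}`. -/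
noncomputable def restCard (A : Finset (MvPolynomial (Fin ℓ) K))
    (H : MvPolynomial (Fin ℓ) K) : ℕ :=
  ((A.erase H).image fun L => {v : Fin ℓ → K | eval v H = 0 ∧ eval v L = 0}).card

lemma homog_div {f H : MvPolynomial (Fin ℓ) K} {r : ℕ} (hH : H.IsHomogeneous 1) (hH0 : H ≠ 0)
    (h : (f * H).IsHomogeneous r) (j : Fin ℓ) : (f * X j).IsHomogeneous r := by
  let _ : GradedAlgebra (homogeneousSubmodule (Fin ℓ) K) := MvPolynomial.gradedAlgebra
  have key : ∀ k, k + 1 ≠ r → homogeneousComponent k f = 0 := by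
    intro k hk
    have h1 := DirectSum.coe_decompose_mul_add_of_right_mem
      (homogeneousSubmodule (Fin ℓ) K) (i := k) (j := 1) (a := f) (b := H) hH
    have h2 : ((DirectSum.decompose (homogeneousSubmodule (Fin ℓ) K) (f * H) (k + 1) :
      homogeneousSubmodule (Fin ℓ) K (k + 1)) : MvPolynomial (Fin ℓ) K) = 0 :=
      DirectSum.decompose_of_mem_ne (homogeneousSubmodule (Fin ℓ) K) h hk.symm
    rw [h2] at h1
    have h3 := (mul_eq_zero.mp h1.symm).resolve_right hH0
    exact (MvPolynomial.decomposition.decompose'_apply f k).symm.trans h3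
  rw [← sum_homogeneousComponent f, Finset.sum_mul]
  apply IsHomogeneous.sum
  intro k _
  by_cases hk : k + 1 = r
  · rw [← hk]
    exact (homogeneousComponent_isHomogeneous k f).mul (isHomogeneous_X K j)
  · rw [key k hk, zero_mul]
    exact isHomogeneous_zero _ _ _

lemma applyDer_mul (θ : Fin ℓ → MvPolynomial (Fin ℓ) K) (f g : MvPolynomial (Fin ℓ) K) :
    applyDer θ (f * g) = applyDer θ f * g + f * applyDer θ g := by
  simp only [applyDer, Finset.sum_mul, Finset.mul_sum, ← Finset.sum_add_distrib]
  refine Finset.sum_congr rfl fun j _ => ?_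
  rw [Derivation.leibniz]
  simp only [smul_eq_mul]
  ring

lemma applyDer_comb (a b : MvPolynomial (Fin ℓ) K) (θ η : Fin ℓ → MvPolynomial (Fin ℓ) K)
    (g : MvPolynomial (Fin ℓ) K) :
    applyDer (fun j => a * θ j - b * η j) g = a * applyDer θ g - b * applyDer η g := by
  simp only [applyDer, Finset.mul_sum, ← Finset.sum_sub_distrib]
  refine Finset.sum_congr rfl fun j _ => ?_
  ring

lemma applyDer_smul (b : MvPolynomial (Fin ℓ) K) (η : Fin ℓ → MvPolynomial (Fin ℓ) K)
    (g : MvPolynomial (Fin ℓ) K) :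
    applyDer (fun j => b * η j) g = b * applyDer η g := by
  simp only [applyDer, Finset.mul_sum, mul_assoc]

lemma applyDer_euler {g : MvPolynomial (Fin ℓ) K} {n : ℕ} (hg : g.IsHomogeneous n) :
    applyDer (fun j => X j) g = (n : MvPolynomial (Fin ℓ) K) * g := by
  have := hg.sum_X_mul_pderiv
  simpa [applyDer] using this

lemma Qpoly_homog {A : Finset (MvPolynomial (Fin ℓ) K)} (hA : IsArrangement A) :
    (Qpoly A).IsHomogeneous A.card := by
  have := IsHomogeneous.prod A (fun α => α) (fun _ => 1) (fun α hα => (hA.1 α hα).2)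
  simpa [Qpoly] using this

lemma linear_prime {H : MvPolynomial (Fin ℓ) K} (hH : H.IsHomogeneous 1) (hH0 : H ≠ 0) :
    Prime H := by
  rw [← UniqueFactorizationMonoid.irreducible_iff_prime]
  apply irreducible_of_totalDegree_eq_one (hH.totalDegree hH0)
  intro x hx
  rw [isUnit_iff_ne_zero]
  rintro rfl
  apply hH0
  ext i
  simpa using hx i

lemma not_dvd_Q {A : Finset (MvPolynomial (Fin ℓ) K)} (hA : IsArrangement A)
    {H : MvPolynomial (Fin ℓ) K} (hH : H ∈ A) : ¬ H ∣ Qpoly (A.erase H) := by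
  intro hd
  have hp := linear_prime (hA.1 H hH).2 (hA.1 H hH).1
  obtain ⟨α, hα, c, hc⟩ := (hp.dvd_finsetProd_iff _).1 hd
  have hα' := Finset.mem_of_mem_erase hα
  have h0 := (hA.1 α hα').1
  have hc0 : c ≠ 0 := by
    rintro rfl
    simp at hc
    exact h0 hc
  have h1 := congrArg totalDegree hc
  rw [totalDegree_mul_of_isDomain hp.ne_zero hc0, (hA.1 α hα').2.totalDegree h0,
    (hA.1 H hH).2.totalDegree hp.ne_zero] at h1
  have h2 := totalDegree_eq_zero_iff_eq_C.1 (show c.totalDegree = 0 by omega)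
  apply hA.2 α hα' H hH (Finset.ne_of_mem_erase hα) (coeff 0 c)
  rw [smul_eq_C_mul, ← h2, mul_comm]
  exact hc

/-- Let `ℓ ≥ 2`, let `A` be an essential hyperplane arrangement in `K^ℓ`,
let `H ∈ A`, and suppose `A' = A \ {H}` is also essential.
Then `r(A') ≤ r(A) ≤ r(A') + 1`. -/
theorem mdr_deletion_bounds (hl : 2 ≤ ℓ) (A : Finset (MvPolynomial (Fin ℓ) K))
    (hA : IsArrangement A) (hAess : IsEssential A)
    (H : MvPolynomial (Fin ℓ) K) (hH : H ∈ A)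
    (hA'ess : IsEssential (A.erase H)) :
    mdr (A.erase H) ≤ mdr A ∧ mdr A ≤ mdr (A.erase H) + 1 := by
  have hArr' : IsArrangement (A.erase H) :=
    ⟨fun α hα => hA.1 α (Finset.mem_of_mem_erase hα), fun α hα β hβ =>
      hA.2 α (Finset.mem_of_mem_erase hα) β (Finset.mem_of_mem_erase hβ)⟩
  obtain ⟨hH0, hH1⟩ := hA.1 H hH
  have hQ : Qpoly A = H * Qpoly (A.erase H) := (Finset.mul_prod_erase A (fun α => α) hH).symm
  have hnd := not_dvd_Q hA hH
  have hQ1 := Qpoly_homog hArr'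
  have hQ2 := Qpoly_homog hA
  have hn' : (A.erase H).card ≠ 0 := by
    intro h
    rw [Finset.card_eq_zero] at h
    have := congrFun (hA'ess (fun _ => 1) (by simp [h])) ⟨0, by omega⟩
    simp at this
  have hn : A.card ≠ 0 := Finset.card_ne_zero_of_mem hH
  have hQ'0 : Qpoly (A.erase H) ≠ 0 := fun h => hnd (h ▸ dvd_zero _)
  generalize hB : A.erase H = B at *
  set n := A.card
  set n' := B.card
  have hc : (n : MvPolynomial (Fin ℓ) K) ≠ 0 := Nat.cast_ne_zero.2 hn
  have hc' : (n' : MvPolynomial (Fin ℓ) K) ≠ 0 := Nat.cast_ne_zero.2 hn'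
  have hcast : ∀ m : ℕ, (m : MvPolynomial (Fin ℓ) K) = C (m : K) := fun m => by simp
  have one : ∀ r, (∃ θ : Fin ℓ → MvPolynomial (Fin ℓ) K, θ ≠ 0 ∧
      (∀ j, (θ j).IsHomogeneous r) ∧ applyDer θ (Qpoly A) = 0) →
      ∃ θ : Fin ℓ → MvPolynomial (Fin ℓ) K, θ ≠ 0 ∧
      (∀ j, (θ j).IsHomogeneous r) ∧ applyDer θ (Qpoly B) = 0 := by
    rintro r ⟨θ, hθ0, hθ, h⟩
    have hθQ := h
    rw [hQ, applyDer_mul] at h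
    have hdvd : H ∣ applyDer θ H * Qpoly B := ⟨- applyDer θ (Qpoly B), by linear_combination h⟩
    obtain ⟨f, hf⟩ := ((linear_prime hH1 hH0).dvd_or_dvd hdvd).resolve_right hnd
    have hfQ : applyDer θ (Qpoly B) = - f * Qpoly B := by
      apply mul_left_cancel₀ hH0
      linear_combination h - Qpoly B * hf
    have hfH : (f * H).IsHomogeneous r := by
      rw [mul_comm, ← hf]
      apply IsHomogeneous.sum
      intro j _
      simpa using (hθ j).mul (hH1.pderiv (i := j))
    refine ⟨fun j => (n' : MvPolynomial (Fin ℓ) K) * θ j - (-f) * X j, ?_, ?_, ?_⟩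
    · intro h0
      have h1 := applyDer_comb (n' : MvPolynomial (Fin ℓ) K) (-f) θ (fun j => X j) (Qpoly A)
      rw [h0, hθQ, applyDer_euler hQ2, hQ] at h1
      have h2 : f * (n * (H * Qpoly B)) = 0 := by
        simp only [applyDer, Pi.zero_apply, zero_mul, Finset.sum_const_zero] at h1
        linear_combination -h1
      have h3 : f = 0 := (mul_eq_zero.1 h2).resolve_right
        (mul_ne_zero hc (mul_ne_zero hH0 hQ'0))
      apply hθ0
      funext j
      have := congrFun h0 j
      simpa [h3, hn'] using this
    · intro j
      have := homog_div hH1 hH0 hfH j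
      show ((n' : MvPolynomial (Fin ℓ) K) * θ j - (-f) * X j).IsHomogeneous r
      rw [neg_mul, hcast]
      exact ((hθ j).C_mul _).sub this.neg
    · rw [applyDer_comb, applyDer_euler hQ1, hfQ]
      ring
  have two : ∀ r, (∃ θ : Fin ℓ → MvPolynomial (Fin ℓ) K, θ ≠ 0 ∧
      (∀ j, (θ j).IsHomogeneous r) ∧ applyDer θ (Qpoly B) = 0) →
      ∃ θ : Fin ℓ → MvPolynomial (Fin ℓ) K, θ ≠ 0 ∧
      (∀ j, (θ j).IsHomogeneous (r + 1)) ∧ applyDer θ (Qpoly A) = 0 := by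
    rintro r ⟨θ, hθ0, hθ, h⟩
    refine ⟨fun j => ((n : MvPolynomial (Fin ℓ) K) * H) * θ j - applyDer θ H * X j, ?_, ?_, ?_⟩
    · intro h0
      have h1 := applyDer_comb ((n : MvPolynomial (Fin ℓ) K) * H) (applyDer θ H) θ (fun j => X j) (Qpoly B)
      rw [h0, h, applyDer_euler hQ1] at h1
      have h2 : applyDer θ H * (n' * Qpoly B) = 0 := by
        simp only [applyDer, Pi.zero_apply, zero_mul, Finset.sum_const_zero] at h1 ⊢
        linear_combination h1
      have h3 : applyDer θ H = 0 := (mul_eq_zero.1 h2).resolve_right (mul_ne_zero hc' hQ'0)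
      apply hθ0
      funext j
      have := congrFun h0 j
      simpa [h3, hn, hH0] using this
    · intro j
      have hfH : (applyDer θ H).IsHomogeneous r := by
        apply IsHomogeneous.sum
        intro j _
        simpa using (hθ j).mul (hH1.pderiv (i := j))
      refine IsHomogeneous.sub ?_ (hfH.mul (isHomogeneous_X K j))
      rw [hcast, add_comm r 1]
      exact (hH1.C_mul _).mul (hθ j)
    · rw [applyDer_comb, applyDer_euler hQ2, hQ, applyDer_mul, h]
      ring
  constructor
  · by_cases hne : {r | ∃ θ : Fin ℓ → MvPolynomial (Fin ℓ) K, θ ≠ 0 ∧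
        (∀ j, (θ j).IsHomogeneous r) ∧ applyDer θ (Qpoly A) = 0}.Nonempty
    · exact Nat.sInf_le (one _ (Nat.sInf_mem hne))
    · have : mdr B = 0 := by
        apply Nat.sInf_eq_zero.2
        right
        rw [Set.eq_empty_iff_forall_notMem]
        exact fun r hr => hne ⟨r + 1, two r hr⟩
      omega
  · by_cases hne : {r | ∃ θ : Fin ℓ → MvPolynomial (Fin ℓ) K, θ ≠ 0 ∧
        (∀ j, (θ j).IsHomogeneous r) ∧ applyDer θ (Qpoly B) = 0}.Nonempty
    · exact Nat.sInf_le (two _ (Nat.sInf_mem hne))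
    · have : mdr A = 0 := by
        apply Nat.sInf_eq_zero.2
        right
        rw [Set.eq_empty_iff_forall_notMem]
        exact fun r hr => hne ⟨r, one r hr⟩
      omega
end

section
/- (Addition theorem for r(A) for line arrangements.) Let A' be a line arrangement in P^2 and let H be a line not in A', with A = A' ∪ {H} essential. Set r' = r(A'). If the number of intersection points of A lying on H is at least r' + 2, then r(A) = r' + 1. -/
open Classical MvPolynomial

variable {K : Type*} [Field K] [CharZero K] {ℓ : ℕ}

namespace MdrAux

set_option linter.unusedSectionVars false

/-- Homogeneous cofactor lemma. -/
theorem hom_factor {P Q : MvPolynomial (Fin 3) K} {m N : ℕ} (hP0 : P ≠ 0)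
    (hP : P.IsHomogeneous m) (hPQ : (P * Q).IsHomogeneous N) (hQ : Q ≠ 0) :
    ∃ k, m + k = N ∧ Q.IsHomogeneous k := by
  have key : ∀ i, homogeneousComponent (m + i) (P * Q) = P * homogeneousComponent i Q := by
    intro i
    conv_lhs => rw [← sum_homogeneousComponent Q]
    rw [Finset.mul_sum, map_sum]
    have : ∀ j ∈ Finset.range (Q.totalDegree + 1),
        homogeneousComponent (m + i) (P * homogeneousComponent j Q)
          = if j = i then P * homogeneousComponent i Q else 0 := by
      intro j _
      rw [homogeneousComponent_of_mem
        (hP.mul (homogeneousComponent_isHomogeneous j Q))]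
      by_cases hij : j = i
      · subst hij; simp
      · have : ¬ (m + j = m + i) := by omega
        rw [if_neg (Ne.symm this), if_neg hij]
    rw [Finset.sum_congr rfl this, Finset.sum_ite_eq']
    split_ifs with hi
    · rfl
    · rw [homogeneousComponent_eq_zero, mul_zero]
      simpa [Nat.lt_succ_iff] using hi
  have hz : ∀ i, m + i ≠ N → homogeneousComponent i Q = 0 := by
    intro i hi
    have h1 := key i
    rw [homogeneousComponent_of_mem hPQ] at h1
    have h2 : P * homogeneousComponent i Q = 0 := by
      rw [← h1, if_neg hi]
    exact (mul_eq_zero.mp h2).resolve_left hP0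
  have hex : ∃ k, homogeneousComponent k Q ≠ 0 := by
    by_contra hcon
    push Not at hcon
    apply hQ
    rw [← sum_homogeneousComponent Q]
    exact Finset.sum_eq_zero fun i _ => hcon i
  obtain ⟨k, hk⟩ := hex
  have hkN : m + k = N := by
    by_contra hne
    exact hk (hz k hne)
  refine ⟨k, hkN, ?_⟩
  have : Q = homogeneousComponent k Q := by
    conv_lhs => rw [← sum_homogeneousComponent Q]
    apply Finset.sum_eq_single_of_mem
    · by_contra hi
      apply hk
      apply homogeneousComponent_eq_zero
      simpa [Nat.lt_succ_iff] using hi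
    · intro j _ hj
      exact hz j (by omega)
  rw [this]
  exact homogeneousComponent_isHomogeneous k Q

theorem hom_factor' {P Q : MvPolynomial (Fin 3) K} {m N : ℕ} (hP0 : P ≠ 0)
    (hP : P.IsHomogeneous m) (hPQ : (P * Q).IsHomogeneous (m + N)) :
    Q.IsHomogeneous N := by
  by_cases hQ : Q = 0
  · rw [hQ]; exact isHomogeneous_zero _ _ _
  · obtain ⟨k, hk, h⟩ := hom_factor hP0 hP hPQ hQ
    have : k = N := by omega
    rwa [← this]

/-- The coefficient vector of a linear form. -/
theorem linear_form {L : MvPolynomial (Fin 3) K} (hL : L.IsHomogeneous 1) :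
    ∃ a : Fin 3 → K, L = ∑ j, C (a j) * X j ∧ ∀ j, pderiv j L = C (a j) := by
  have h0 : ∀ j, pderiv j L = C (coeff 0 (pderiv j L)) := by
    intro j
    have : (pderiv j L).IsHomogeneous 0 := hL.pderiv
    rw [← totalDegree_zero_iff_isHomogeneous] at this
    exact totalDegree_eq_zero_iff_eq_C.mp this
  refine ⟨fun j => coeff 0 (pderiv j L), ?_, h0⟩
  have := hL.sum_X_mul_pderiv
  rw [one_smul] at this
  conv_lhs => rw [← this]
  refine Finset.sum_congr rfl fun j _ => ?_
  rw [mul_comm, ← h0 j]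

theorem applyDer_mul (θ : Fin 3 → MvPolynomial (Fin 3) K) (f g : MvPolynomial (Fin 3) K) :
    applyDer θ (f * g) = applyDer θ f * g + f * applyDer θ g := by
  simp only [applyDer, pderiv_mul, Fin.sum_univ_three]
  ring

theorem applyDer_X {f : MvPolynomial (Fin 3) K} {n : ℕ} (hf : f.IsHomogeneous n)
    (p : MvPolynomial (Fin 3) K) :
    applyDer (fun j => p * X j) f = (n : MvPolynomial (Fin 3) K) * p * f := by
  have := hf.sum_X_mul_pderiv
  simp only [applyDer]
  rw [nsmul_eq_mul] at this
  calc _ = p * ∑ j, X j * pderiv j f := by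
        rw [Finset.mul_sum]; exact Finset.sum_congr rfl fun j _ => by ring
    _ = _ := by rw [this]; ring

theorem Q_hom {A : Finset (MvPolynomial (Fin 3) K)} (hA : IsArrangement A) :
    (Qpoly A).IsHomogeneous A.card := by
  have := IsHomogeneous.prod A (fun α => α) (fun _ => 1) (fun α hα => (hA.1 α hα).2)
  simpa [Qpoly] using this

theorem Q_ne {A : Finset (MvPolynomial (Fin 3) K)} (hA : IsArrangement A) :
    Qpoly A ≠ 0 := Finset.prod_ne_zero_iff.mpr fun α hα => (hA.1 α hα).1

/-- Projection onto the plane of a linear form. -/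
theorem proj {L : MvPolynomial (Fin 3) K} (hL : L.IsHomogeneous 1) (hL0 : L ≠ 0) :
    ∃ (i : Fin 3) (σ : MvPolynomial (Fin 3) K →ₐ[K] MvPolynomial (Fin 3) K),
      (∀ j, j ≠ i → σ (X j) = X j) ∧ (∀ j, (σ (X j)).IsHomogeneous 1) ∧
      (∀ P, L ∣ P - σ P) ∧ (∀ P, σ P = 0 ↔ L ∣ P) ∧
      (∀ P, (∀ v : Fin 3 → K, eval v L = 0 → eval v P = 0) → L ∣ P) := by
  obtain ⟨a, ha, -⟩ := linear_form hL
  have hex : ∃ i, a i ≠ 0 := by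
    by_contra hcon
    push Not at hcon
    exact hL0 (by rw [ha]; simp [hcon])
  obtain ⟨i, hi⟩ := hex
  have hev : ∀ v, eval v L = ∑ j, a j * v j := by
    intro v; rw [ha]; simp
  let s : Fin 3 → MvPolynomial (Fin 3) K := fun j => if j = i then X j - C (a i)⁻¹ * L else X j
  let σ : MvPolynomial (Fin 3) K →ₐ[K] MvPolynomial (Fin 3) K := aeval s
  have hσX : ∀ j, σ (X j) = s j := fun j => aeval_X _ _
  have hdvd : ∀ P, L ∣ P - σ P := by
    intro P
    induction P using MvPolynomial.induction_on with
    | C c => simp [σ, ← algebraMap_eq]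
    | add p q hp hq =>
      rw [map_add, add_sub_add_comm]; exact dvd_add hp hq
    | mul_X p j hp =>
      have h1 : L ∣ X j - s j := by
        simp only [s]; split_ifs <;> simp
      rw [map_mul, hσX]
      have : p * X j - σ p * s j = (p - σ p) * X j + σ p * (X j - s j) := by ring
      rw [this]
      exact dvd_add (hp.mul_right _) (h1.mul_left _)
  have hσL : σ L = 0 := by
    have : σ L = ∑ j, C (a j) * s j := by
      conv_lhs => rw [ha]
      simp [σ, algebraMap_eq]
    have h2 : ∀ j, C (a j) * s j = C (a j) * X j - if j = i then L else 0 := by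
      intro j
      simp only [s]
      split_ifs with h
      · subst h
        rw [mul_sub, ← mul_assoc, ← C_mul, mul_inv_cancel₀ hi]; simp
      · simp
    rw [this, Finset.sum_congr rfl fun j _ => h2 j, Finset.sum_sub_distrib, ← ha]
    simp
  have hiff : ∀ P, σ P = 0 ↔ L ∣ P := by
    intro P
    constructor
    · intro h; have := hdvd P; rwa [h, sub_zero] at this
    · rintro ⟨Q, rfl⟩; rw [map_mul, hσL, zero_mul]
  refine ⟨i, σ, ?_, ?_, hdvd, hiff, ?_⟩
  · intro j hj; rw [hσX]; simp [s, hj]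
  · intro j; rw [hσX]; simp only [s]
    split_ifs
    · exact (isHomogeneous_X _ _).sub (hL.C_mul _)
    · exact isHomogeneous_X _ _
  · intro P hP
    rw [← hiff]
    apply MvPolynomial.funext
    intro v
    have h0 : ∀ R, eval v (σ R) = eval (fun j => eval v (s j)) R := by
      intro R
      induction R using MvPolynomial.induction_on with
      | C c => simp [σ, algebraMap_eq]
      | add p q hp hq => rw [map_add, map_add, map_add, hp, hq]
      | mul_X p j hp => rw [map_mul, map_mul, map_mul, hp, hσX, eval_X]
    rw [h0, map_zero]
    apply hP
    rw [← h0, hσL, map_zero]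

theorem prime_linear {L : MvPolynomial (Fin 3) K} (hL : L.IsHomogeneous 1) (hL0 : L ≠ 0) :
    Prime L := by
  obtain ⟨i, σ, -, -, -, h, -⟩ := proj hL hL0
  refine ⟨hL0, ?_, ?_⟩
  · intro hu
    have : L ∣ 1 := hu.dvd
    rw [← h, map_one] at this
    exact one_ne_zero this
  · intro a b hab
    rw [← h, map_mul, mul_eq_zero, h, h] at hab
    exact hab

theorem not_dvd {A : Finset (MvPolynomial (Fin 3) K)} (hA : IsArrangement A)
    {L M : MvPolynomial (Fin 3) K} (hL : L ∈ A) (hM : M ∈ A) (hne : M ≠ L) : ¬ L ∣ M := by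
  rintro ⟨g, hg⟩
  have h1 := (hA.1 M hM).2
  rw [hg] at h1
  have h2 : g.IsHomogeneous 0 :=
    hom_factor' (hA.1 L hL).1 (hA.1 L hL).2 (N := 0) h1
  rw [← totalDegree_zero_iff_isHomogeneous] at h2
  have h3 := totalDegree_eq_zero_iff_eq_C.mp h2
  apply hA.2 M hM L hL hne (coeff 0 g)
  rw [smul_eq_C_mul, ← h3, mul_comm, hg]

theorem dvd_of_der_zero {A : Finset (MvPolynomial (Fin 3) K)} (hA : IsArrangement A)
    {θ : Fin 3 → MvPolynomial (Fin 3) K} (hθ : applyDer θ (Qpoly A) = 0)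
    {L : MvPolynomial (Fin 3) K} (hL : L ∈ A) : L ∣ applyDer θ L := by
  have hp := prime_linear (hA.1 L hL).2 (hA.1 L hL).1
  have h1 : Qpoly A = L * ∏ M ∈ A.erase L, M := (Finset.mul_prod_erase A (fun M => M) hL).symm
  rw [h1, applyDer_mul] at hθ
  have h2 : L ∣ applyDer θ L * ∏ M ∈ A.erase L, M := by
    rw [eq_neg_of_add_eq_zero_left hθ]
    exact (Dvd.intro _ rfl).neg_right
  rcases hp.dvd_or_dvd h2 with h | h
  · exact h
  · exfalso
    obtain ⟨M, hM, hd⟩ := (hp.dvd_finsetProd_iff _).mp h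
    rw [Finset.mem_erase] at hM
    exact not_dvd hA hL hM.2 hM.1 hd

theorem Q_dvd {A : Finset (MvPolynomial (Fin 3) K)} {η : Fin 3 → MvPolynomial (Fin 3) K}
    (h : ∀ L ∈ A, L ∣ applyDer η L) : Qpoly A ∣ applyDer η (Qpoly A) := by
  induction A using Finset.induction_on with
  | empty => simp [Qpoly]
  | insert a s ha ih =>
    have h1 : Qpoly (insert a s) = a * Qpoly s := Finset.prod_insert ha
    rw [h1, applyDer_mul]
    refine dvd_add (mul_dvd_mul_right (h a (Finset.mem_insert_self _ _)) _) (mul_dvd_mul_left _ ?_)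
    exact ih fun L hL => h L (Finset.mem_insert_of_mem hL)

theorem span_plane {a v : Fin 3 → K} (ha : a ≠ 0) (hv : v ≠ 0) (hav : ∑ j, a j * v j = 0) :
    ∃ u : Fin 3 → K, ∑ j, a j * u j = 0 ∧
      ∀ x : Fin 3 → K, ∑ j, a j * x j = 0 → ∃ s t : K, ∀ j, x j = s * u j + t * v j := by
  let φ : (Fin 3 → K) →ₗ[K] K := ∑ j, a j • LinearMap.proj j
  have hφ : ∀ x, φ x = ∑ j, a j * x j := by intro x; simp [φ]
  have hφ0 : φ ≠ 0 := by
    intro h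
    apply ha
    funext j
    have := hφ (Pi.single j 1)
    rw [h] at this
    simpa [Pi.single_apply] using this.symm
  have hr := LinearMap.finrank_range_add_finrank_ker φ
  rw [LinearMap.range_eq_top.mpr (LinearMap.surjective hφ0)] at hr
  have hk : Module.finrank K (LinearMap.ker φ) = 2 := by
    simp at hr; omega
  let v' : LinearMap.ker φ := ⟨v, by rw [LinearMap.mem_ker, hφ, hav]⟩
  have hv' : v' ≠ 0 := fun h => hv (congrArg Subtype.val h)
  have hex : ∃ u : LinearMap.ker φ, u ∉ Submodule.span K {v'} := by
    by_contra hcon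
    push Not at hcon
    have : Submodule.span K {v'} = ⊤ := Submodule.eq_top_iff'.mpr hcon
    have h2 := finrank_span_singleton (K := K) hv'
    rw [this, finrank_top, hk] at h2
    omega
  obtain ⟨u, hu⟩ := hex
  have hli : LinearIndependent K ![v', u] := by
    rw [LinearIndependent.pair_iff' hv']
    intro c hc
    exact hu (Submodule.mem_span_singleton.mpr ⟨c, hc⟩)
  have hspan := hli.span_eq_top_of_card_eq_finrank' (by simp [hk])
  refine ⟨u, by rw [← hφ]; exact u.2, ?_⟩
  intro x hx
  have hx' : (⟨x, by rw [LinearMap.mem_ker, hφ, hx]⟩ : LinearMap.ker φ) ∈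
      Submodule.span K (Set.range ![v', u]) := by rw [hspan]; trivial
  rw [Matrix.range_cons, Matrix.range_cons, Matrix.range_empty, Set.union_empty,
    Set.singleton_union, Submodule.mem_span_pair] at hx'
  obtain ⟨t, s, hst⟩ := hx'
  refine ⟨s, t, fun j => ?_⟩
  have := congrFun (congrArg Subtype.val hst) j
  rw [add_comm]
  simpa [v'] using this.symm

theorem eval_smul_hom {P : MvPolynomial (Fin 3) K} {n : ℕ} (hP : P.IsHomogeneous n)
    (c : K) (v : Fin 3 → K) : eval (fun j => c * v j) P = c ^ n * eval v P := by
  rw [eval_eq, eval_eq, Finset.mul_sum]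
  refine Finset.sum_congr rfl fun d hd => ?_
  have h1 := hP.degree_eq_sum_deg_support hd
  simp only [mul_pow, Finset.prod_mul_distrib, Finset.prod_pow_eq_pow_sum]
  rw [← h1]
  ring

theorem line_zero {P : MvPolynomial (Fin 3) K} {n : ℕ} (hP : P.IsHomogeneous n)
    {u v : Fin 3 → K} (T : Finset K) (hT : n < T.card)
    (h : ∀ t ∈ T, eval (fun j => u j + t * v j) P = 0) : eval v P = 0 := by
  let q : Polynomial K := aeval (fun j => Polynomial.C (v j) * Polynomial.X + Polynomial.C (u j)) P
  have hq : ∀ t, q.eval t = eval (fun j => u j + t * v j) P := by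
    intro t
    have : ∀ R, (aeval (fun j => Polynomial.C (v j) * Polynomial.X + Polynomial.C (u j)) R :
        Polynomial K).eval t = eval (fun j => u j + t * v j) R := by
      intro R
      induction R using MvPolynomial.induction_on with
      | C c => simp
      | add p q hp hq => rw [map_add, Polynomial.eval_add, map_add, hp, hq]
      | mul_X p j hp =>
        rw [map_mul, Polynomial.eval_mul, map_mul, hp, aeval_X, eval_X]
        congr 1
        simp
        ring
    exact this P
  have hdeg : q.natDegree ≤ n := by
    have := MvPolynomial.aeval_natDegree_le P hP.totalDegree_le
      (fun j => Polynomial.C (v j) * Polynomial.X + Polynomial.C (u j)) (n := 1)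
      (fun j => Polynomial.natDegree_linear_le)
    simpa using this
  have hq0 : q = 0 := by
    apply Polynomial.eq_zero_of_natDegree_lt_card_of_eval_eq_zero' q T
    · intro t ht; rw [hq]; exact h t ht
    · omega
  have hall : ∀ t : K, eval (fun j => u j + t * v j) P = 0 := by
    intro t; rw [← hq, hq0, Polynomial.eval_zero]
  let w : Polynomial K := aeval (fun j => Polynomial.C (u j) * Polynomial.X + Polynomial.C (v j)) P
  have hw : ∀ t, w.eval t = eval (fun j => v j + t * u j) P := by
    intro t
    have : ∀ R, (aeval (fun j => Polynomial.C (u j) * Polynomial.X + Polynomial.C (v j)) R :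
        Polynomial K).eval t = eval (fun j => v j + t * u j) R := by
      intro R
      induction R using MvPolynomial.induction_on with
      | C c => simp
      | add p q hp hq => rw [map_add, Polynomial.eval_add, map_add, hp, hq]
      | mul_X p j hp =>
        rw [map_mul, Polynomial.eval_mul, map_mul, hp, aeval_X, eval_X]
        congr 1
        simp
        ring
    exact this P
  have hw0 : Polynomial.X * w = 0 := by
    apply Polynomial.funext
    intro t
    rw [Polynomial.eval_mul, Polynomial.eval_X, Polynomial.eval_zero, hw]
    by_cases ht : t = 0
    · rw [ht, zero_mul]
    · have h1 := eval_smul_hom hP t (fun j => u j + t⁻¹ * v j)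
      rw [hall, mul_zero] at h1
      have h2 : (fun j => t * (u j + t⁻¹ * v j)) = fun j => v j + t * u j := by
        funext j; field_simp; ring
      rw [← h2, h1, mul_zero]
  have hw1 : w = 0 := (mul_eq_zero.mp hw0).resolve_left Polynomial.X_ne_zero
  have h3 := hw 0
  rw [hw1] at h3
  simpa using h3.symm


theorem eval_linear {L : MvPolynomial (Fin 3) K} (hL : L.IsHomogeneous 1)
    (u v : Fin 3 → K) (s t : K) :
    eval (fun j => s * u j + t * v j) L = s * eval u L + t * eval v L := by
  obtain ⟨a, ha, -⟩ := linear_form hL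
  rw [ha]
  simp only [Fin.sum_univ_three, map_add, map_mul, eval_C, eval_X]
  ring

theorem eval_applyDer {L : MvPolynomial (Fin 3) K} (hL : L.IsHomogeneous 1)
    (θ : Fin 3 → MvPolynomial (Fin 3) K) (x : Fin 3 → K) :
    eval x (applyDer θ L) = eval (fun j => eval x (θ j)) L := by
  obtain ⟨a, ha, hd⟩ := linear_form hL
  simp only [applyDer, hd]
  rw [ha]
  simp only [Fin.sum_univ_three, map_add, map_mul, eval_C, eval_X]
  ring

theorem plane_vanish {A' : Finset (MvPolynomial (Fin 3) K)}
    {H : MvPolynomial (Fin 3) K} (hH : H ∉ A')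
    (hA : IsArrangement (insert H A')) {r : ℕ}
    (h : r + 2 ≤ restCard (insert H A') H)
    {θ : Fin 3 → MvPolynomial (Fin 3) K} (hθ : ∀ j, (θ j).IsHomogeneous r)
    (hd : ∀ L ∈ insert H A', L ∣ applyDer θ L) (j k : Fin 3) :
    H ∣ X j * θ k - X k * θ j := by
  have hHm : H ∈ insert H A' := Finset.mem_insert_self _ _
  have hLm : ∀ L ∈ A', L ∈ insert H A' := fun L hL => Finset.mem_insert_of_mem hL
  obtain ⟨hH0, hH1⟩ := hA.1 H hHm
  obtain ⟨-, -, -, -, -, -, hnull⟩ := proj hH1 hH0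
  have hD : ∀ L ∈ insert H A', ∀ x, eval x L = 0 → eval (fun j => eval x (θ j)) L = 0 := by
    intro L hL x hx
    rw [← eval_applyDer (hA.1 L hL).2]
    obtain ⟨g, hg⟩ := hd L hL
    rw [hg, map_mul, hx, zero_mul]
  apply hnull
  intro v hv
  by_cases hv0 : v = 0
  · subst hv0; simp
  obtain ⟨a, ha, -⟩ := linear_form hH1
  have hev : ∀ x, eval x H = ∑ j, a j * x j := by
    intro x; rw [ha]; simp
  have ha0 : a ≠ 0 := by
    rintro rfl
    exact hH0 (by rw [ha]; simp)
  obtain ⟨u, hu, hspan⟩ := span_plane ha0 hv0 (by rw [← hev, hv])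
  rw [← hev] at hu
  simp_rw [← hev] at hspan
  by_cases hcase : ∃ L ∈ A', eval v L = 0
  · obtain ⟨L, hL, hvL⟩ := hcase
    have huL : eval u L ≠ 0 := by
      intro huL
      refine not_dvd hA hHm (hLm L hL) (fun e => hH (e ▸ hL)) (hnull L ?_)
      intro x hx
      obtain ⟨s, t, hst⟩ := hspan x hx
      rw [show x = fun j => s * u j + t * v j from funext hst,
        eval_linear (hA.1 L (hLm L hL)).2, huL, hvL]
      ring
    obtain ⟨s, t, hst⟩ := hspan _ (hD H hHm v hv)
    have h1 := hD L (hLm L hL) v hvL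
    rw [show (fun j => eval v (θ j)) = fun j => s * u j + t * v j from funext hst,
        eval_linear (hA.1 L (hLm L hL)).2, hvL, mul_zero, add_zero] at h1
    have hs : s = 0 := (mul_eq_zero.mp h1).resolve_right huL
    simp only [map_sub, map_mul, eval_X, hst, hs]
    ring
  · push Not at hcase
    let τ : MvPolynomial (Fin 3) K → K := fun L => - eval u L / eval v L
    have hτ : ∀ L ∈ A', ∀ s t : K, s * eval u L + t * eval v L = 0 ↔ t = s * τ L := by
      intro L hL s t
      have := hcase L hL
      simp only [τ]
      field_simp
      constructor <;> intro h <;> linear_combination h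
    refine line_zero (u := u) (n := 1 + r) ?_ (A'.image τ) ?_ ?_
    · exact ((isHomogeneous_X _ _).mul (hθ k)).sub ((isHomogeneous_X _ _).mul (hθ j))
    · have h2 : restCard (insert H A') H ≤ (A'.image τ).card := by
        unfold restCard
        rw [Finset.erase_insert hH]
        let G : K → Set (Fin 3 → K) := fun t =>
          {x | eval x H = 0 ∧ ∃ s, ∀ j, x j = s * u j + (s * t) * v j}
        have h3 : A'.image (fun L => {x : Fin 3 → K | eval x H = 0 ∧ eval x L = 0})
            = (A'.image τ).image G := by
          rw [Finset.image_image]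
          apply Finset.image_congr
          intro L hL
          have hL : L ∈ A' := hL
          ext x
          simp only [Function.comp, G, Set.mem_ofPred_eq]
          refine and_congr_right fun hx => ?_
          constructor
          · intro hxL
            obtain ⟨s, t, hst⟩ := hspan x hx
            rw [show x = fun j => s * u j + t * v j from funext hst,
              eval_linear (hA.1 L (hLm L hL)).2, hτ L hL] at hxL
            exact ⟨s, by rw [← hxL]; exact hst⟩
          · rintro ⟨s, hs⟩
            rw [show x = fun j => s * u j + (s * τ L) * v j from funext hs,
              eval_linear (hA.1 L (hLm L hL)).2, hτ L hL]
        have h4 := Finset.card_image_le (s := A'.image τ) (f := G)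
        rw [← h3] at h4
        convert h4
      omega
    · intro t ht
      obtain ⟨L, hL, rfl⟩ := Finset.mem_image.mp ht
      have hx1 : ∀ M : MvPolynomial (Fin 3) K, M.IsHomogeneous 1 →
          eval (fun j => u j + τ L * v j) M = 1 * eval u M + τ L * eval v M := by
        intro M hM
        rw [← eval_linear hM]
        simp only [one_mul]
      have hxH : eval (fun j => u j + τ L * v j) H = 0 := by
        rw [hx1 H hH1, hu, hv]; ring
      have hxL : eval (fun j => u j + τ L * v j) L = 0 := by
        rw [hx1 L (hA.1 L (hLm L hL)).2, hτ L hL]; ring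
      obtain ⟨s, t, hst⟩ := hspan _ (hD H hHm _ hxH)
      have h1 := hD L (hLm L hL) _ hxL
      rw [show (fun j => eval (fun j => u j + τ L * v j) (θ j))
          = fun j => s * u j + t * v j from funext hst,
        eval_linear (hA.1 L (hLm L hL)).2, hτ L hL] at h1
      simp only [map_sub, map_mul, eval_X, hst, h1]
      ring

/-- The set of degrees of Jacobian relations is nonempty, so `mdr` is attained. -/
theorem mdr_spec {A : Finset (MvPolynomial (Fin 3) K)} (hA : IsArrangement A) :
    ∃ θ : Fin 3 → MvPolynomial (Fin 3) K, θ ≠ 0 ∧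
    (∀ j, (θ j).IsHomogeneous (mdr A)) ∧ applyDer θ (Qpoly A) = 0 := by
  have hne : {r | ∃ θ : Fin 3 → MvPolynomial (Fin 3) K, θ ≠ 0 ∧
    (∀ j, (θ j).IsHomogeneous r) ∧ applyDer θ (Qpoly A) = 0}.Nonempty := by
    have hQ : ∀ j, (pderiv j (Qpoly A)).IsHomogeneous (A.card - 1) := fun j => (Q_hom hA).pderiv
    by_cases h0 : pderiv 0 (Qpoly A) = 0
    · refine ⟨0, ![1, 0, 0], ?_, ?_, ?_⟩
      · intro h; exact one_ne_zero (congrFun h 0)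
      · intro j
        fin_cases j
        · exact isHomogeneous_one _ _
        · exact isHomogeneous_zero _ _ _
        · exact isHomogeneous_zero _ _ _
      · simp [applyDer, Fin.sum_univ_three, h0]
    · refine ⟨A.card - 1, ![pderiv 1 (Qpoly A), - pderiv 0 (Qpoly A), 0], ?_, ?_, ?_⟩
      · intro h; exact h0 (neg_eq_zero.mp (congrFun h 1))
      · intro j
        fin_cases j
        · exact hQ 1
        · exact (hQ 0).neg
        · exact isHomogeneous_zero _ _ _
      · simp [applyDer, Fin.sum_univ_three]; ring
  exact Nat.sInf_mem hne

theorem mdr_le {A : Finset (MvPolynomial (Fin 3) K)} {r : ℕ}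
    {θ : Fin 3 → MvPolynomial (Fin 3) K} (h0 : θ ≠ 0)
    (hθ : ∀ j, (θ j).IsHomogeneous r) (h : applyDer θ (Qpoly A) = 0) : mdr A ≤ r :=
  Nat.sInf_le ⟨θ, h0, hθ, h⟩

theorem euler_zero {A : Finset (MvPolynomial (Fin 3) K)} (hA : IsArrangement A)
    (hc : A.card ≠ 0) {p : MvPolynomial (Fin 3) K}
    (h : applyDer (fun j => p * X j) (Qpoly A) = 0) : p = 0 := by
  rw [applyDer_X (Q_hom hA)] at h
  have hc' : ((A.card : ℕ) : MvPolynomial (Fin 3) K) ≠ 0 := Nat.cast_ne_zero.mpr hc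
  rcases mul_eq_zero.mp h with h | h
  · exact (mul_eq_zero.mp h).resolve_left hc'
  · exact absurd h (Q_ne hA)

theorem applyDer_comb (g₁ g₂ : MvPolynomial (Fin 3) K)
    (θ₁ θ₂ : Fin 3 → MvPolynomial (Fin 3) K) (f : MvPolynomial (Fin 3) K) :
    applyDer (fun j => g₁ * θ₁ j + g₂ * θ₂ j) f = g₁ * applyDer θ₁ f + g₂ * applyDer θ₂ f := by
  simp only [applyDer, Fin.sum_univ_three]
  ring

theorem upper {A' : Finset (MvPolynomial (Fin 3) K)}
    {H : MvPolynomial (Fin 3) K} (hH : H ∉ A')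
    (hA' : IsArrangement A') (hA : IsArrangement (insert H A')) (hc : A'.card ≠ 0) :
    mdr (insert H A') ≤ mdr A' + 1 := by
  obtain ⟨hH0, hH1⟩ := hA.1 H (Finset.mem_insert_self _ _)
  obtain ⟨θ, h0, hθ, hz⟩ := mdr_spec hA'
  have hQ : Qpoly (insert H A') = H * Qpoly A' := Finset.prod_insert hH
  have hcard := Finset.card_insert_of_notMem hH
  set d : ℕ := (insert H A').card with hd
  have hd0 : d ≠ 0 := by omega
  have hgh : (applyDer θ H).IsHomogeneous (mdr A') := by
    unfold applyDer
    apply IsHomogeneous.sum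
    intro j _
    exact (hθ j).mul (hH1.pderiv (i := j))
  have hform := applyDer_comb ((d : MvPolynomial (Fin 3) K) * H) (-1) θ
    (fun j => applyDer θ H * X j)
  refine mdr_le (θ := fun j => ((d : MvPolynomial (Fin 3) K) * H) * θ j
    + (-1) * (applyDer θ H * X j)) ?_ ?_ ?_
  · intro hzero
    have h1 := hform (Qpoly A')
    rw [hzero, hz, applyDer_X (Q_hom hA')] at h1
    have h2 : applyDer (0 : Fin 3 → MvPolynomial (Fin 3) K) (Qpoly A') = 0 := by
      simp [applyDer]
    rw [h2] at h1
    have h3 : applyDer θ H = 0 := by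
      apply euler_zero hA' hc
      rw [applyDer_X (Q_hom hA')]
      linear_combination h1
    apply h0
    funext j
    have h4 := congrFun hzero j
    simp only [h3, zero_mul, mul_zero, add_zero, Pi.zero_apply] at h4
    have hd' : (d : MvPolynomial (Fin 3) K) ≠ 0 := Nat.cast_ne_zero.mpr hd0
    exact (mul_eq_zero.mp h4).resolve_left (mul_ne_zero hd' hH0)
  · intro j
    refine IsHomogeneous.add ?_ ?_
    · have := ((hH1.mul (hθ j)).C_mul (d : K))
      rw [add_comm 1] at this
      rw [mul_assoc]
      simpa using this
    · rw [neg_one_mul]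
      exact (hgh.mul (isHomogeneous_X _ _)).neg
  · rw [hform, applyDer_X (Q_hom hA), hQ, applyDer_mul, hz]
    ring

theorem lower {A' : Finset (MvPolynomial (Fin 3) K)}
    {H : MvPolynomial (Fin 3) K} (hH : H ∉ A')
    (hA' : IsArrangement A') (hA : IsArrangement (insert H A')) (hc : A'.card ≠ 0)
    (h : mdr A' + 2 ≤ restCard (insert H A') H) :
    mdr A' + 1 ≤ mdr (insert H A') := by
  by_contra hcon
  have hr : mdr (insert H A') ≤ mdr A' := by omega
  have hHm : H ∈ insert H A' := Finset.mem_insert_self _ _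
  obtain ⟨hH0, hH1⟩ := hA.1 H hHm
  obtain ⟨θ, h0, hθ, hz⟩ := mdr_spec hA
  set r := mdr (insert H A') with hrdef
  have hcA : (insert H A').card ≠ 0 := by
    rw [Finset.card_insert_of_notMem hH]; omega
  have hnoE : ∀ p : MvPolynomial (Fin 3) K, (∀ j, θ j = p * X j) → False := by
    intro p hp
    have : θ = fun j => p * X j := funext hp
    rw [this] at hz
    have hp0 := euler_zero hA hcA hz
    apply h0
    funext j
    rw [hp, hp0, zero_mul]; rfl
  have hd : ∀ L ∈ insert H A', L ∣ applyDer θ L := fun L hL => dvd_of_der_zero hA hz hL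
  have hpl := plane_vanish hH hA (r := r) (by omega) hθ hd
  obtain ⟨i, σ, hσX, hσh, hσd, hσ0, -⟩ := proj hH1 hH0
  obtain ⟨j, k, hji, hki, hjk⟩ : ∃ j k : Fin 3, j ≠ i ∧ k ≠ i ∧ j ≠ k := by
    fin_cases i
    · exact ⟨1, 2, by decide⟩
    · exact ⟨0, 2, by decide⟩
    · exact ⟨0, 1, by decide⟩
  have hrel : ∀ m, X j * σ (θ m) = σ (X m) * σ (θ j) := by
    intro m
    have := (hσ0 _).mpr (hpl j m)
    rw [map_sub, map_mul, map_mul, hσX j hji] at this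
    exact sub_eq_zero.mp this
  have hXj : (X j : MvPolynomial (Fin 3) K) ∣ σ (θ j) := by
    have h1 := hrel k
    rw [hσX k hki] at h1
    have h2 : (X j : MvPolynomial (Fin 3) K) ∣ X k * σ (θ j) := ⟨_, h1.symm⟩
    rcases (X_prime (R := K) (i := j)).dvd_or_dvd h2 with h3 | h3
    · exact absurd (X_dvd_X.mp h3) hjk
    · exact h3
  obtain ⟨p, hp⟩ := hXj
  have hσθ : ∀ m, σ (θ m) = p * σ (X m) := by
    intro m
    have h1 := hrel m
    rw [hp] at h1
    apply mul_left_cancel₀ (X_ne_zero (R := K) j)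
    rw [h1]; ring
  have hσθh : (X j * p).IsHomogeneous r := by
    rw [← hp]
    have h1 : σ = aeval (fun m => σ (X m)) := by
      apply MvPolynomial.algHom_ext; intro m; rw [aeval_X]
    have h2 := (hθ j).aeval (fun m => σ (X m)) (n := 1) hσh
    rw [h1]
    simpa using h2
  have hpX : ∀ m, (p * X m).IsHomogeneous r := by
    intro m
    by_cases hp0 : p = 0
    · rw [hp0, zero_mul]; exact isHomogeneous_zero _ _ _
    · obtain ⟨k, hk, hpk⟩ := hom_factor (X_ne_zero (R := K) j) (isHomogeneous_X _ _) hσθh hp0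
      rw [← hk, add_comm]
      exact hpk.mul (isHomogeneous_X _ _)
  have hdiv : ∀ m, H ∣ θ m - p * X m := by
    intro m
    have h1 := hσd (θ m)
    have h2 := hσd (X m)
    rw [hσθ] at h1
    have : θ m - p * X m = (θ m - p * σ (X m)) - p * (X m - σ (X m)) := by ring
    rw [this]
    exact dvd_sub h1 (h2.mul_left _)
  choose η hη using hdiv
  have hHη : ∀ m, (H * η m).IsHomogeneous r := by
    intro m; rw [← hη]; exact (hθ m).sub (hpX m)
  have hex : ∃ m, η m ≠ 0 := by
    by_contra hcon2
    push Not at hcon2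
    apply hnoE p
    intro m
    have := hη m
    rw [hcon2, mul_zero] at this
    exact sub_eq_zero.mp this
  obtain ⟨m₀, hm₀⟩ := hex
  obtain ⟨e, he, -⟩ := hom_factor hH0 hH1 (hHη m₀) hm₀
  have hηh : ∀ m, (η m).IsHomogeneous e := by
    intro m
    apply hom_factor' hH0 hH1
    rw [he]; exact hHη m
  -- `η` is tangent to `A'`
  have hηd : ∀ L ∈ A', L ∣ applyDer η L := by
    intro L hL
    have hLm : L ∈ insert H A' := Finset.mem_insert_of_mem hL
    obtain ⟨hL0, hL1⟩ := hA.1 L hLm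
    have h1 : L ∣ H * applyDer η L := by
      have h2 := applyDer_comb H 0 η 0 L
      have h3 := applyDer_comb 1 (-1) θ (fun m => p * X m) L
      have h4 : (fun j => H * η j + 0 * (0 : Fin 3 → MvPolynomial (Fin 3) K) j)
          = fun j => 1 * θ j + -1 * (p * X j) := by
        funext m
        rw [← hη m]; ring
      rw [h4, h3, applyDer_X hL1] at h2
      rw [zero_mul, add_zero] at h2
      rw [← h2]
      apply dvd_add
      · exact (hd L hLm).mul_left _
      · exact Dvd.intro_left (-1 * (((1 : ℕ) : MvPolynomial (Fin 3) K) * p)) (by ring)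
    rcases (prime_linear hL1 hL0).dvd_or_dvd h1 with h2 | h2
    · exact absurd h2 (not_dvd hA hLm hHm (fun e => hH (e ▸ hL)))
    · exact h2
  obtain ⟨q, hq⟩ := Q_dvd hηd
  set d : ℕ := A'.card with hddef
  have hd' : (d : MvPolynomial (Fin 3) K) ≠ 0 := Nat.cast_ne_zero.mpr hc
  have hqX : ∀ m, (q * X m).IsHomogeneous e := by
    intro m
    by_cases hq0 : q = 0
    · rw [hq0, zero_mul]; exact isHomogeneous_zero _ _ _
    · have h1 : (Qpoly A' * q).IsHomogeneous (e + (d - 1)) := by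
        rw [← hq]
        unfold applyDer
        apply IsHomogeneous.sum
        intro j _
        exact (hηh j).mul ((Q_hom hA').pderiv (i := j))
      obtain ⟨k, hk, hqk⟩ := hom_factor (Q_ne hA') (Q_hom hA') h1 hq0
      have : e = k + 1 := by omega
      rw [this]
      exact hqk.mul (isHomogeneous_X _ _)
  by_cases hη' : (fun j => (d : MvPolynomial (Fin 3) K) * η j + (-1) * (q * X j)) = 0
  · apply hnoE (p + C ((d : K)⁻¹) * q * H)
    intro m
    have h1 := congrFun hη' m
    simp only [Pi.zero_apply] at h1
    have h2 : (C ((d : K)⁻¹) : MvPolynomial (Fin 3) K) * (d : MvPolynomial (Fin 3) K) = 1 := by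
      have hdK : (d : K) ≠ 0 := Nat.cast_ne_zero.mpr hc
      rw [← map_natCast (C : K →+* MvPolynomial (Fin 3) K), ← C_mul, inv_mul_cancel₀ hdK, C_1]
    have h3 := hη m
    linear_combination h3 + C ((d : K)⁻¹) * H * h1 - H * η m * h2
  · have h1 : mdr A' ≤ e := by
      refine mdr_le hη' ?_ ?_
      · intro m
        refine IsHomogeneous.add ?_ ?_
        · simpa using (hηh m).C_mul (d : K)
        · rw [neg_one_mul]; exact (hqX m).neg
      · rw [applyDer_comb, applyDer_X (Q_hom hA'), hq]
        ring
    omega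

end MdrAux

/-- Addition theorem for `r(A)` for line arrangements:
Let `A'` be a line arrangement in `P^2` and let `H` be a line not in `A'`, with
`A = A' ∪ {H}` essential. Set `r' = r(A')`. If the number of intersection points of
`A` lying on `H` is at least `r' + 2`, then `r(A) = r' + 1`. -/
theorem mdr_addition_lines (A' : Finset (MvPolynomial (Fin 3) K))
    (H : MvPolynomial (Fin 3) K) (hH : H ∉ A')
    (hA' : IsArrangement A') (hA : IsArrangement (insert H A'))
    (hAess : IsEssential (insert H A'))
    (h : mdr A' + 2 ≤ restCard (insert H A') H) :
    mdr (insert H A') = mdr A' + 1 := by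

  have hc : A'.card ≠ 0 := by
    intro hc
    rw [Finset.card_eq_zero] at hc
    subst hc
    simp [restCard] at h
  exact le_antisymm (MdrAux.upper hH hA' hA hc) (MdrAux.lower hH hA' hA hc h)
end
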